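/- arXiv:2508.06446 — 5 statements merged into one kernel-verified Lean document; each statement's English description precedes it below -/
import Mathlib

section
/- Let d ≥ 1 be an integer and let (Λ, B_r^d) be a robust lattice covering of ℝ^d whose density vol(B_r^d)/det(Λ) is at most ν_d. Then the collection of fundamental parallelepipeds of Λ that are contained in the ball B_{2r}^d is finite, of cardinality at most (4^d · d^{d/2} + 1)^{d·2^d}. -/
open MeasureTheory Pointwise

noncomputable section

/-- The lattice generated by vectors `b`. -/
def latticeSet {n : ℕ} (b : Fin n → EuclideanSpace ℝ (Fin n)) :
    Set (EuclideanSpace ℝ (Fin n)) :=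
  {x | ∃ c : Fin n → ℤ, x = ∑ i, (c i : ℝ) • b i}

/-- The determinant of the lattice generated by `b`. -/
def latticeDet {n : ℕ} (b : Fin n → EuclideanSpace ℝ (Fin n)) : ℝ :=
  |(Matrix.of fun i j => b j i).det|

/-- Vertex set of the parallelepiped starting at `x` generated by `v`. -/
def vertexSet {n : ℕ} (x : EuclideanSpace ℝ (Fin n))
    (v : Fin n → EuclideanSpace ℝ (Fin n)) : Set (EuclideanSpace ℝ (Fin n)) :=
  {y | ∃ lam : Fin n → ℝ, (∀ i, lam i = 0 ∨ lam i = 1) ∧ y = x + ∑ i, lam i • v i}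

/-- `P` is a fundamental parallelepiped of the lattice `Λ` with determinant `detΛ`. -/
def IsFundParallelepiped {n : ℕ} (Λ : Set (EuclideanSpace ℝ (Fin n))) (detΛ : ℝ)
    (P : Set (EuclideanSpace ℝ (Fin n))) : Prop :=
  ∃ x v, LinearIndependent ℝ v ∧ P = convexHull ℝ (vertexSet x v) ∧
    vertexSet x v ⊆ Λ ∧ volume P = ENNReal.ofReal detΛ

/-- `(Λ(b), B_r)` is a lattice covering of `ℝⁿ`. -/
def IsLatticeCovering {n : ℕ} (b : Fin n → EuclideanSpace ℝ (Fin n)) (r : ℝ) : Prop :=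
  LinearIndependent ℝ b ∧ latticeSet b + Metric.closedBall 0 r = Set.univ

/-- `(Λ(b), B_r)` is a robust lattice covering of `ℝⁿ`. -/
def IsRobustCovering {n : ℕ} (b : Fin n → EuclideanSpace ℝ (Fin n)) (r : ℝ) : Prop :=
  IsLatticeCovering b r ∧
  ∀ c : EuclideanSpace ℝ (Fin n),
    ∃ P, IsFundParallelepiped (latticeSet b) (latticeDet b) P ∧
      P ⊆ Metric.closedBall c r

/-- The density of the lattice covering `(Λ(b), B_r)`. -/
def coveringDensity {n : ℕ} (b : Fin n → EuclideanSpace ℝ (Fin n)) (r : ℝ) : ℝ :=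
  (volume (Metric.closedBall (0 : EuclideanSpace ℝ (Fin n)) r)).toReal / latticeDet b

/-- `ν_d`, the volume of the ball of radius `√d` in `ℝ^d`. -/
def nu (d : ℕ) : ℝ :=
  (volume (Metric.closedBall (0 : EuclideanSpace ℝ (Fin d)) (Real.sqrt d))).toReal

/-- Hadamard for the column matrix. -/
theorem hadamard_aux {d : ℕ} (w : Fin d → EuclideanSpace ℝ (Fin d)) :
    |(Matrix.of fun i j => w j i).det| ≤ ∏ i, ‖w i‖ := by
  haveI : Fact (Module.finrank ℝ (EuclideanSpace ℝ (Fin d)) = d) := ⟨by simp⟩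
  let e := EuclideanSpace.basisFun (Fin d) ℝ
  have h := Orientation.abs_volumeForm_apply_le (e.toBasis.orientation) w
  rw [Orientation.volumeForm_robust _ e rfl] at h
  have h2 : e.toBasis.det w = (Matrix.of fun i j => w j i).det := by
    rw [Module.Basis.det_apply]
    congr 1
  rwa [h2] at h

theorem latticeDet_pos_aux {d : ℕ} (b : Fin d → EuclideanSpace ℝ (Fin d))
    (hb : LinearIndependent ℝ b) : (Matrix.of fun i j => b j i).det ≠ 0 := by
  let e := EuclideanSpace.basisFun (Fin d) ℝ
  have h2 : e.toBasis.det b = (Matrix.of fun i j => b j i).det := by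
    rw [Module.Basis.det_apply]
    congr 1
  rw [← h2]
  have := (e.toBasis.is_basis_iff_det (v := b)).1
    ⟨hb, hb.span_eq_top_of_card_eq_finrank' (by simp)⟩
  exact this.ne_zero

theorem det_lattice_aux {d : ℕ} (b w : Fin d → EuclideanSpace ℝ (Fin d))
    (C : Matrix (Fin d) (Fin d) ℤ) (hw : ∀ j, w j = ∑ i, (C i j : ℝ) • b i) :
    (Matrix.of fun i j => w j i).det = (Matrix.of fun i j => b j i).det * (C.det : ℝ) := by
  have h1 : (C.det : ℝ) = (C.map (Int.castRingHom ℝ)).det := by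
    have := (Int.castRingHom ℝ).map_det C
    simpa using this
  rw [h1, ← Matrix.det_mul]
  congr 1
  ext i j
  simp [Matrix.mul_apply, hw, mul_comm]

theorem lattice_points_aux {d : ℕ} (b v : Fin d → EuclideanSpace ℝ (Fin d)) (R M : ℝ)
    (hb : LinearIndependent ℝ b) (hv : LinearIndependent ℝ v)
    (hvL : ∀ i, v i ∈ latticeSet b) (hvR : ∀ i, ‖v i‖ ≤ R)
    (hM : R ^ d ≤ M * latticeDet b) (hM0 : 0 ≤ M) :
    ∃ S : Finset (EuclideanSpace ℝ (Fin d)),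
      (∀ y ∈ latticeSet b, ‖y‖ ≤ R → y ∈ S) ∧ (S.card : ℝ) ≤ (2 * M + 1) ^ d := by
  classical
  choose c hc using hvL
  let C : Matrix (Fin d) (Fin d) ℤ := Matrix.of fun i j => c j i
  have hvC : ∀ j, v j = ∑ i, (C i j : ℝ) • b i := fun j => hc j
  have hB := latticeDet_pos_aux b hb
  have hC : C.det ≠ 0 := by
    intro h
    have h1 := det_lattice_aux b v C hvC
    rw [h] at h1
    exact latticeDet_pos_aux v hv (by simpa using h1)
  have hinj : Function.Injective (fun z : Fin d → ℤ => C.cramer z) := by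
    intro z z' h
    have h1 := Matrix.mulVec_cramer C z
    have h2 := Matrix.mulVec_cramer C z'
    simp only at h
    rw [h, h2] at h1
    funext i
    have := congrFun h1 i
    simp only [Pi.smul_apply, smul_eq_mul] at this
    exact (mul_left_cancel₀ hC this).symm
  let m : ℤ := ⌊M⌋
  let K : Finset (Fin d → ℤ) := Fintype.piFinset fun _ => Finset.Icc (-m) m
  let Z : Finset (Fin d → ℤ) := K.preimage (fun z => C.cramer z) hinj.injOn
  refine ⟨Z.image fun z => ∑ i, (z i : ℝ) • b i, ?_, ?_⟩
  · rintro y ⟨z, rfl⟩ hy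
    refine Finset.mem_image.2 ⟨z, ?_, rfl⟩
    rw [Finset.mem_preimage, Fintype.mem_piFinset]
    intro j
    rw [Matrix.cramer_apply, Finset.mem_Icc, ← abs_le]
    apply Int.le_floor.2
    rw [Int.cast_abs]
    set y := ∑ i, (z i : ℝ) • b i with hyd
    have h1 := det_lattice_aux b (Function.update v j y) (C.updateCol j z) (by
      intro k
      by_cases hk : k = j
      · subst hk; simp [hyd]
      · simp [hk, hvC])
    have h2 := hadamard_aux (Function.update v j y)
    have h3 : ∏ i, ‖Function.update v j y i‖ ≤ R ^ d := by
      calc _ ≤ ∏ i : Fin d, R := Finset.prod_le_prod (fun _ _ => norm_nonneg _) (by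
            intro k _
            by_cases hk : k = j
            · subst hk; simpa using hy
            · simpa [hk] using hvR k)
        _ = R ^ d := by simp
    rw [h1, abs_mul] at h2
    have hpos : 0 < latticeDet b := abs_pos.2 hB
    have h4 : latticeDet b * |((C.updateCol j z).det : ℝ)| ≤ latticeDet b * M := by
      rw [mul_comm _ M]
      exact h2.trans (h3.trans hM)
    exact le_of_mul_le_mul_left h4 hpos
  · have h1 : (Z.image fun z => ∑ i, (z i : ℝ) • b i).card ≤ K.card := by
      refine Finset.card_image_le.trans ?_
      exact Finset.card_le_card_of_injOn (fun z => C.cramer z)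
        (fun z hz => Finset.mem_preimage.1 hz) hinj.injOn
    have hm0 : 0 ≤ m := Int.floor_nonneg.2 hM0
    have h2 : (K.card : ℝ) = (2 * (m : ℝ) + 1) ^ d := by
      have h5 : (((m + 1 + m).toNat : ℤ) : ℝ) = 2 * (m : ℝ) + 1 := by
        rw [Int.toNat_of_nonneg (by omega)]; push_cast; ring
      simp only [K, Fintype.card_piFinset, Int.card_Icc, Finset.prod_const, Finset.card_univ,
        Fintype.card_fin, sub_neg_eq_add]
      rw [Nat.cast_pow, ← h5]
      norm_cast
    have hmM : (m : ℝ) ≤ M := Int.floor_le M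
    have hm0' : (0 : ℝ) ≤ m := by exact_mod_cast hm0
    calc _ ≤ (K.card : ℝ) := by exact_mod_cast h1
      _ = _ := h2
      _ ≤ _ := by gcongr

theorem vertex_mem_aux {n : ℕ} (x : EuclideanSpace ℝ (Fin n))
    (v : Fin n → EuclideanSpace ℝ (Fin n)) :
    x ∈ vertexSet x v ∧ ∀ i, x + v i ∈ vertexSet x v := by
  classical
  refine ⟨⟨fun _ => 0, fun _ => Or.inl rfl, by simp⟩, fun i => ⟨Pi.single i 1, fun j => ?_, ?_⟩⟩
  · by_cases h : j = i
    · subst h; simp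
    · simp [h]
  · simp [Pi.single_apply]

/-- **Lemma 3.1.** For a robust lattice covering `(Λ, B_r)` of `ℝ^d` with density at most
`ν_d`, the number of fundamental parallelepipeds of `Λ` contained in `B_{2r}` is at most
`(4^d d^{d/2} + 1)^{d·2^d}`. -/
theorem fund_parallelepipeds_in_double_ball (d : ℕ) (hd : 1 ≤ d)
    (b : Fin d → EuclideanSpace ℝ (Fin d)) (r : ℝ)
    (hrob : IsRobustCovering b r) (hden : coveringDensity b r ≤ nu d) :
    {P : Set (EuclideanSpace ℝ (Fin d)) |
        IsFundParallelepiped (latticeSet b) (latticeDet b) P ∧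
        P ⊆ Metric.closedBall 0 (2 * r)}.Finite ∧
    (({P : Set (EuclideanSpace ℝ (Fin d)) |
        IsFundParallelepiped (latticeSet b) (latticeDet b) P ∧
        P ⊆ Metric.closedBall 0 (2 * r)}.ncard : ℝ) ≤
      (4 ^ d * (d : ℝ) ^ ((d : ℝ) / 2) + 1) ^ (d * 2 ^ d)) := by
  classical
  obtain ⟨⟨hb, -⟩, hrob⟩ := hrob
  obtain ⟨P, ⟨x, v, hv, rfl, hvL, -⟩, hPr⟩ := hrob 0
  have hsub := (subset_convexHull ℝ (vertexSet x v)).trans hPr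
  obtain ⟨hx, hxv⟩ := vertex_mem_aux x v
  have hxr : ‖x‖ ≤ r := by simpa using hsub hx
  have hr : 0 ≤ r := (norm_nonneg x).trans hxr
  have hpos : 0 < latticeDet b := abs_pos.2 (latticeDet_pos_aux b hb)
  have hdd : (d : ℝ) ^ ((d : ℝ) / 2) = Real.sqrt d ^ d := by
    rw [Real.sqrt_eq_rpow, ← Real.rpow_natCast, ← Real.rpow_mul (by positivity)]
    congr 1; ring
  set s : ℝ := Real.sqrt d ^ d with hs
  have hs0 : 0 ≤ s := by positivity
  have hrd : r ^ d ≤ s * latticeDet b := by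
    unfold coveringDensity nu at hden
    rw [div_le_iff₀ hpos, Measure.addHaar_closedBall _ _ hr,
      Measure.addHaar_closedBall _ _ (Real.sqrt_nonneg _), ENNReal.toReal_mul,
      ENNReal.toReal_mul, ENNReal.toReal_ofReal (by positivity),
      ENNReal.toReal_ofReal (by positivity), finrank_euclideanSpace_fin] at hden
    have hV : 0 < (volume (Metric.ball (0 : EuclideanSpace ℝ (Fin d)) 1)).toReal :=
      ENNReal.toReal_pos (Metric.measure_ball_pos _ _ one_pos).ne' measure_ball_lt_top.ne
    refine le_of_mul_le_mul_right ?_ hV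
    calc _ ≤ _ := hden
      _ = _ := by ring
  have hvL' : ∀ i, v i ∈ latticeSet b := by
    intro i
    obtain ⟨c, hc⟩ := hvL hx
    obtain ⟨c', hc'⟩ := hvL (hxv i)
    refine ⟨c' - c, ?_⟩
    have : v i = (x + v i) - x := by abel
    rw [this, hc', hc, ← Finset.sum_sub_distrib]
    simp [sub_smul]
  have hvR : ∀ i, ‖v i‖ ≤ 2 * r := by
    intro i
    have h1 : ‖x + v i‖ ≤ r := by simpa using hsub (hxv i)
    have : v i = (x + v i) - x := by abel
    rw [this]
    linarith [norm_sub_le (x + v i) x]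
  obtain ⟨S, hS, hcard⟩ := lattice_points_aux b v (2 * r) (2 ^ d * s) hb hv hvL' hvR
    (by rw [mul_pow, mul_assoc]; gcongr) (by positivity)
  rw [hdd]
  set T := {P : Set (EuclideanSpace ℝ (Fin d)) |
        IsFundParallelepiped (latticeSet b) (latticeDet b) P ∧
        P ⊆ Metric.closedBall 0 (2 * r)} with hT
  let F : Finset (Option (Fin d) → EuclideanSpace ℝ (Fin d)) := Fintype.piFinset fun _ => S
  let g : (Option (Fin d) → EuclideanSpace ℝ (Fin d)) → Set (EuclideanSpace ℝ (Fin d)) :=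
    fun f => convexHull ℝ (vertexSet (f none) fun i => f (some i) - f none)
  have hTF : T ⊆ ((F.image g : Finset _) : Set (Set (EuclideanSpace ℝ (Fin d)))) := by
    rintro Q ⟨⟨y, w, -, rfl, hwL, -⟩, hQ⟩
    have hsub' := (subset_convexHull ℝ (vertexSet y w)).trans hQ
    obtain ⟨hy, hyw⟩ := vertex_mem_aux y w
    rw [Finset.mem_coe, Finset.mem_image]
    refine ⟨fun o => o.elim y fun i => y + w i, ?_, ?_⟩
    · rw [Fintype.mem_piFinset]
      rintro (_ | i)
      · exact hS _ (hwL hy) (by simpa using hsub' hy)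
      · exact hS _ (hwL (hyw i)) (by simpa using hsub' (hyw i))
    · simp [g]
  refine ⟨(Finset.finite_toSet _).subset hTF, ?_⟩
  have h1 : T.ncard ≤ S.card ^ (d + 1) := by
    have h2 := Set.ncard_le_ncard hTF (Finset.finite_toSet _)
    rw [Set.ncard_coe_finset] at h2
    refine h2.trans (Finset.card_image_le.trans ?_)
    simp [F, Fintype.card_piFinset]
  have hK : 2 * (2 ^ d * s) + 1 ≤ 4 ^ d * s + 1 := by
    have h2 : (2 : ℝ) ≤ 2 ^ d := by
      simpa using pow_le_pow_right₀ (one_le_two (α := ℝ)) hd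
    have h4 : (4 : ℝ) ^ d = 2 ^ d * 2 ^ d := by rw [← mul_pow]; norm_num
    rw [h4]
    have : 2 * (2 ^ d * s) ≤ 2 ^ d * (2 ^ d * s) := by gcongr
    linarith
  have hK1 : 1 ≤ 4 ^ d * s + 1 := by
    have : 0 ≤ 4 ^ d * s := by positivity
    linarith
  calc (T.ncard : ℝ) ≤ (S.card : ℝ) ^ (d + 1) := by exact_mod_cast h1
    _ ≤ ((2 * (2 ^ d * s) + 1) ^ d) ^ (d + 1) := by gcongr
    _ ≤ ((4 ^ d * s + 1) ^ d) ^ (d + 1) := by gcongr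
    _ = (4 ^ d * s + 1) ^ (d * (d + 1)) := by rw [pow_mul]
    _ ≤ _ := pow_le_pow_right₀ hK1 (Nat.mul_le_mul_left _ (Nat.succ_le_of_lt Nat.lt_two_pow_self))


end
end

section
/- Let d ≥ 1 be an integer and let (Λ, B_r^d) be a robust lattice covering of ℝ^d with det(Λ) = 1 and vol(B_r^d) ≤ ν_d. Then the number of lattice points of Λ contained in the ball B_{2r}^d is at most ((4r)^d + 1)^d; in particular it is at most (4^d · d^{d/2} + 1)^d. -/
open MeasureTheory Pointwise

noncomputable section

theorem aux_hadamard {n : ℕ} (w : Fin n → EuclideanSpace ℝ (Fin n)) :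
    latticeDet w ≤ ∏ i, ‖w i‖ := by
  have : Fact (Module.finrank ℝ (EuclideanSpace ℝ (Fin n)) = n) := ⟨by simp⟩
  let e := EuclideanSpace.basisFun (Fin n) ℝ
  have h1 := (e.toBasis.orientation).abs_volumeForm_apply_le w
  rw [e.toBasis.orientation.volumeForm_robust' e w] at h1
  have h2 : e.toBasis.det w = (Matrix.of fun i j => w j i).det := by
    rw [Module.Basis.det_apply]
    congr 1
  rw [h2] at h1
  exact h1

theorem aux_int {n : ℕ} (b w : Fin n → EuclideanSpace ℝ (Fin n)) (hdet : latticeDet b = 1)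
    (hw : ∀ i, w i ∈ latticeSet b) :
    ∃ k : ℤ, (Matrix.of fun i j => w j i).det = (Matrix.of fun i j => b j i).det * (k : ℝ) := by
  choose c hc using hw
  let C : Matrix (Fin n) (Fin n) ℤ := Matrix.of fun i j => c j i
  refine ⟨C.det, ?_⟩
  have hC : ((C.det : ℤ) : ℝ) = (C.map (Int.cast : ℤ → ℝ)).det := by
    exact Int.cast_det C
  rw [hC, ← Matrix.det_mul]
  congr 1
  ext i j
  simp only [Matrix.of_apply, Matrix.mul_apply, Matrix.map_apply, C]
  rw [hc j]
  simp [mul_comm]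

theorem aux_inj {n : ℕ} (v : Fin n → EuclideanSpace ℝ (Fin n)) (hv : LinearIndependent ℝ v)
    (x y : EuclideanSpace ℝ (Fin n))
    (h : ∀ i, (Matrix.of fun k j => (Function.update v i x) j k).det =
      (Matrix.of fun k j => (Function.update v i y) j k).det) : x = y := by
  let A : Matrix (Fin n) (Fin n) ℝ := Matrix.of fun i j => v j i
  have hu : ∀ (z : EuclideanSpace ℝ (Fin n)) i,
      (Matrix.of fun k j => (Function.update v i z) j k) = A.updateCol i z.ofLp := by
    intro z i
    ext k j
    by_cases hj : j = i
    · subst hj; simp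
    · simp [hj, A]
  have hA : A.det ≠ 0 := by
    have hcol : LinearIndependent ℝ A.col := by
      have := hv.map' (WithLp.linearEquiv 2 ℝ (Fin n → ℝ)).toLinearMap (LinearEquiv.ker _)
      exact this
    have := Matrix.linearIndependent_cols_iff_isUnit.mp hcol
    exact ((Matrix.isUnit_iff_isUnit_det A).mp this).ne_zero
  have hc : A.cramer x.ofLp = A.cramer y.ofLp := by
    ext i
    rw [Matrix.cramer_apply, Matrix.cramer_apply, ← hu, ← hu, h]
  have h3 : A.det • x.ofLp = A.det • y.ofLp := by
    rw [← Matrix.mulVec_cramer, ← Matrix.mulVec_cramer, hc]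
  have := smul_right_injective _ hA h3
  ext i
  exact congrFun this i

theorem aux_radius (d : ℕ) (hd : 1 ≤ d) (r : ℝ) (hr : 0 ≤ r)
    (hvol : (volume (Metric.closedBall (0 : EuclideanSpace ℝ (Fin d)) r)).toReal ≤ nu d) :
    r ≤ Real.sqrt d := by
  unfold nu at hvol
  rw [Measure.addHaar_closedBall _ _ hr, Measure.addHaar_closedBall _ _ (Real.sqrt_nonneg _),
    ENNReal.toReal_mul, ENNReal.toReal_mul, ENNReal.toReal_ofReal (by positivity),
    ENNReal.toReal_ofReal (by positivity)] at hvol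
  have hpos : 0 < (volume (Metric.ball (0 : EuclideanSpace ℝ (Fin d)) 1)).toReal :=
    ENNReal.toReal_pos (Metric.measure_ball_pos _ _ one_pos).ne' measure_ball_lt_top.ne
  have h := le_of_mul_le_mul_right hvol hpos
  rw [finrank_euclideanSpace_fin] at h
  exact le_of_pow_le_pow_left₀ (by omega) (Real.sqrt_nonneg _) h

/-- **Claim 3.2.** For a robust lattice covering `(Λ, B_r)` of `ℝ^d` with `det(Λ) = 1` and
`vol(B_r) ≤ ν_d`, the number of lattice points of `Λ` in `B_{2r}` is at most
`((4r)^d + 1)^d`, and in particular at most `(4^d d^{d/2} + 1)^d`. -/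
theorem lattice_points_in_double_ball (d : ℕ) (hd : 1 ≤ d)
    (b : Fin d → EuclideanSpace ℝ (Fin d)) (r : ℝ)
    (hrob : IsRobustCovering b r) (hdet : latticeDet b = 1)
    (hvol : (volume (Metric.closedBall (0 : EuclideanSpace ℝ (Fin d)) r)).toReal ≤ nu d) :
    (latticeSet b ∩ Metric.closedBall 0 (2 * r)).Finite ∧
    ((latticeSet b ∩ Metric.closedBall 0 (2 * r)).ncard : ℝ) ≤ ((4 * r) ^ d + 1) ^ d ∧
    ((latticeSet b ∩ Metric.closedBall 0 (2 * r)).ncard : ℝ) ≤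
      (4 ^ d * (d : ℝ) ^ ((d : ℝ) / 2) + 1) ^ d := by
  obtain ⟨P, ⟨x, v, hv, hP, hvert, -⟩, hPr⟩ := hrob.2 0
  have hsub : vertexSet x v ⊆ Metric.closedBall 0 r :=
    (subset_convexHull ℝ _).trans (hP ▸ hPr)
  have hx : x ∈ vertexSet x v := ⟨fun _ => 0, by simp, by simp⟩
  have hxv : ∀ i, x + v i ∈ vertexSet x v := fun i =>
    ⟨Pi.single i 1, fun j => by
      by_cases h : j = i
      · subst h; simp
      · simp [h], by simp [Pi.single_apply, ite_smul]⟩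
  have hr : 0 ≤ r := (norm_nonneg x).trans (mem_closedBall_zero_iff.mp (hsub hx))
  have hvn : ∀ i, ‖v i‖ ≤ 2 * r := by
    intro i
    have h1 := mem_closedBall_zero_iff.mp (hsub hx)
    have h2 := mem_closedBall_zero_iff.mp (hsub (hxv i))
    have h3 := norm_sub_le (x + v i) x
    rw [add_sub_cancel_left] at h3
    linarith
  have hvL : ∀ i, v i ∈ latticeSet b := by
    intro i
    obtain ⟨c, hc⟩ := hvert hx
    obtain ⟨c', hc'⟩ := hvert (hxv i)
    refine ⟨c' - c, ?_⟩
    have : v i = (x + v i) - x := by abel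
    rw [this, hc', hc, ← Finset.sum_sub_distrib]
    refine Finset.sum_congr rfl fun j _ => ?_
    simp [sub_smul]
  have hupd : ∀ y ∈ latticeSet b, ∀ i j, Function.update v i y j ∈ latticeSet b := by
    intro y hy i j
    by_cases h : j = i
    · subst h; simpa using hy
    · simpa [h] using hvL j
  have key : ∀ y : EuclideanSpace ℝ (Fin d), ∀ i, ∃ k : ℤ, y ∈ latticeSet b →
      (Matrix.of fun i' j => (Function.update v i y) j i').det =
        (Matrix.of fun i j => b j i).det * (k : ℝ) := by
    intro y i
    by_cases hy : y ∈ latticeSet b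
    · obtain ⟨k, hk⟩ := aux_int b (Function.update v i y) hdet (hupd y hy i)
      exact ⟨k, fun _ => hk⟩
    · exact ⟨0, fun h => absurd h hy⟩
  choose f hf using key
  set N : ℕ := ⌊(2 * r) ^ d⌋₊ with hN
  let T : Finset (Fin d → ℤ) := Fintype.piFinset fun _ => Finset.Icc (-(N : ℤ)) N
  have hmaps : ∀ y ∈ latticeSet b ∩ Metric.closedBall 0 (2 * r), f y ∈ (T : Set (Fin d → ℤ)) := by
    rintro y ⟨hy, hyr⟩
    rw [mem_closedBall_zero_iff] at hyr
    simp only [T, Finset.mem_coe, Fintype.mem_piFinset, Finset.mem_Icc]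
    intro i
    have h1 := aux_hadamard (Function.update v i y)
    have h2 : ∏ j, ‖Function.update v i y j‖ ≤ (2 * r) ^ d := by
      calc ∏ j, ‖Function.update v i y j‖ ≤ ∏ _j : Fin d, (2 * r) := by
            refine Finset.prod_le_prod (fun _ _ => norm_nonneg _) fun j _ => ?_
            by_cases h : j = i
            · subst h; simpa using hyr
            · simpa [h] using hvn j
        _ = (2 * r) ^ d := by simp
    have h3 : latticeDet (Function.update v i y) = |(f y i : ℝ)| := by
      unfold latticeDet at hdet ⊢
      rw [hf y i hy, abs_mul, hdet, one_mul]
    have h4 : ((f y i).natAbs : ℝ) ≤ (2 * r) ^ d := by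
      rw [Nat.cast_natAbs, Int.cast_abs, ← h3]
      exact h1.trans h2
    have h5 := Nat.le_floor h4
    rw [← hN] at h5
    omega
  have hinj : Set.InjOn f (latticeSet b ∩ Metric.closedBall 0 (2 * r)) := by
    rintro y ⟨hy, -⟩ z ⟨hz, -⟩ hyz
    refine aux_inj v hv y z fun i => ?_
    rw [hf y i hy, hf z i hz, hyz]
  have hcard : (latticeSet b ∩ Metric.closedBall 0 (2 * r)).ncard ≤ (2 * N + 1) ^ d := by
    have h := Set.ncard_le_ncard_of_injOn f hmaps hinj T.finite_toSet
    rw [Set.ncard_coe_finset] at h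
    refine h.trans (le_of_eq ?_)
    simp only [T, Fintype.card_piFinset, Int.card_Icc, Finset.prod_const, Finset.card_univ,
      Fintype.card_fin]
    congr 1
    omega
  have hNle : (N : ℝ) ≤ (2 * r) ^ d := Nat.floor_le (by positivity)
  have h24 : (2 : ℝ) * (2 * r) ^ d ≤ (4 * r) ^ d := by
    have : (4 * r) ^ d = 2 ^ d * (2 * r) ^ d := by rw [← mul_pow]; ring
    rw [this]
    refine mul_le_mul_of_nonneg_right ?_ (by positivity)
    calc (2 : ℝ) = 2 ^ 1 := by norm_num
      _ ≤ 2 ^ d := pow_le_pow_right₀ (by norm_num) hd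
  have hmain : ((latticeSet b ∩ Metric.closedBall 0 (2 * r)).ncard : ℝ) ≤
      ((4 * r) ^ d + 1) ^ d := by
    have h : ((latticeSet b ∩ Metric.closedBall 0 (2 * r)).ncard : ℝ) ≤ (2 * (N : ℝ) + 1) ^ d := by
      exact_mod_cast hcard
    refine h.trans (pow_le_pow_left₀ (by positivity) ?_ d)
    linarith
  refine ⟨Set.Finite.of_injOn hmaps hinj T.finite_toSet, hmain, hmain.trans ?_⟩
  refine pow_le_pow_left₀ (by positivity) ?_ d
  have hrd := aux_radius d hd r hr hvol
  have h6 : (d : ℝ) ^ ((d : ℝ) / 2) = (Real.sqrt d) ^ d := by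
    rw [Real.sqrt_eq_rpow, ← Real.rpow_natCast, ← Real.rpow_mul (by positivity)]
    congr 1
    ring
  rw [h6, mul_pow]
  gcongr

end
end

section
/- Let K ⊆ ℝⁿ be a convex body and let δ := ρ̄(ℤⁿ + K) = vol([0,1)ⁿ ∖ (ℤⁿ + K)). Then ∫_{[0,1)ⁿ} ρ̄(ℤⁿ + (K ∪ (K + y))) dy = δ², where y ranges over [0,1)ⁿ with Lebesgue measure; that is, if y is chosen uniformly at random from [0,1)ⁿ, the expected uncovered density of ℤⁿ + (K ∪ (K + y)) equals δ². -/
open MeasureTheory Pointwise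

noncomputable section

/-- The integer lattice `ℤⁿ ⊆ ℝⁿ`. -/
def intLat (n : ℕ) : Set (EuclideanSpace ℝ (Fin n)) :=
  {x | ∀ i, ∃ m : ℤ, x i = (m : ℝ)}

/-- The fundamental cube `[0,1)ⁿ ⊆ ℝⁿ`. -/
def unitCube (n : ℕ) : Set (EuclideanSpace ℝ (Fin n)) :=
  {x | ∀ i, x i ∈ Set.Ico (0 : ℝ) 1}

/-- The uncovered density `ρ̄(ℤⁿ + A) = vol([0,1)ⁿ \ (ℤⁿ + A))`. -/
def rhoBar {n : ℕ} (A : Set (EuclideanSpace ℝ (Fin n))) : ℝ :=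
  (volume (unitCube n \ (intLat n + A))).toReal


def latSub (n : ℕ) : AddSubgroup (EuclideanSpace ℝ (Fin n)) where
  carrier := intLat n
  zero_mem' := fun i => ⟨0, by simp⟩
  add_mem' := by
    intro a b ha hb i
    obtain ⟨p, hp⟩ := ha i
    obtain ⟨q, hq⟩ := hb i
    exact ⟨p + q, by simp [hp, hq]⟩
  neg_mem' := by
    intro a ha i
    obtain ⟨p, hp⟩ := ha i
    exact ⟨-p, by simp [hp]⟩

lemma mem_latSub {n : ℕ} (x : EuclideanSpace ℝ (Fin n)) : x ∈ latSub n ↔ x ∈ intLat n := Iff.rfl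

lemma intLat_countable (n : ℕ) : (intLat n).Countable := by
  have : intLat n ⊆ Set.range (fun f : Fin n → ℤ => WithLp.toLp 2 (fun i => (f i : ℝ))) := by
    intro x hx
    choose f hf using hx
    exact ⟨f, by ext i; simp [hf]⟩
  exact (Set.countable_range _).mono this

instance latSub_countable (n : ℕ) : Countable (latSub n) := (intLat_countable n).to_subtype

lemma unitCube_meas (n : ℕ) : MeasurableSet (unitCube n) := by
  have : unitCube n = ⋂ i, (fun x : EuclideanSpace ℝ (Fin n) => x i) ⁻¹' Set.Ico (0 : ℝ) 1 := by
    ext x; simp [unitCube]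
  rw [this]
  refine MeasurableSet.iInter fun i => ?_
  have hc : Continuous (fun x : EuclideanSpace ℝ (Fin n) => x i) := by fun_prop
  exact hc.measurable measurableSet_Ico

lemma unitCube_fin (n : ℕ) : volume (unitCube n) < ⊤ := by
  have hb : unitCube n ⊆ WithLp.ofLp ⁻¹' (Set.Icc (0 : Fin n → ℝ) 1) := by
    intro x hx
    exact ⟨fun i => (hx i).1, fun i => (hx i).2.le⟩
  refine lt_of_le_of_lt (measure_mono hb) ?_
  rw [(PiLp.volume_preserving_ofLp (Fin n)).measure_preimage
    measurableSet_Icc.nullMeasurableSet]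
  exact isCompact_Icc.measure_lt_top

lemma exu (n : ℕ) (x : EuclideanSpace ℝ (Fin n)) : ∃! g : latSub n, (g : EuclideanSpace ℝ (Fin n)) + x ∈ unitCube n := by
  refine ⟨⟨WithLp.toLp 2 (fun i => ((-⌊x i⌋ : ℤ) : ℝ)), fun i => ⟨_, rfl⟩⟩, ?_, ?_⟩
  · intro i
    have h1 := Int.floor_le (x i)
    have h2 := Int.lt_floor_add_one (x i)
    simp only [PiLp.add_apply, Int.cast_neg, Set.mem_Ico]
    constructor <;> linarith
  · rintro ⟨g, hg⟩ h
    ext i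
    obtain ⟨m, hm⟩ := hg i
    have h3 := h i
    simp only [PiLp.add_apply, Set.mem_Ico, hm] at h3
    have : ⌊x i⌋ = -m := by
      rw [Int.floor_eq_iff]; push_cast; constructor <;> linarith [h3.1, h3.2]
    simp [this, hm]

lemma fd (n : ℕ) : IsAddFundamentalDomain (latSub n) (unitCube n) volume :=
  .mk' (unitCube_meas n).nullMeasurableSet (fun x => exu n x)

lemma fd' (n : ℕ) (x : EuclideanSpace ℝ (Fin n)) :
    IsAddFundamentalDomain (latSub n) ((fun z => x - z) ⁻¹' unitCube n) volume := by
  refine .mk' ((unitCube_meas n).preimage (by fun_prop)).nullMeasurableSet (fun z => ?_)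
  obtain ⟨g, hg, hu⟩ := exu n (x - z)
  refine ⟨-g, ?_, ?_⟩
  · change x - (((-g : latSub n) : EuclideanSpace ℝ (Fin n)) + z) ∈ unitCube n
    convert hg using 1
    push_cast; abel
  · intro y hy
    have := hu (-y) (by
      change x - ((y : EuclideanSpace ℝ (Fin n)) + z) ∈ unitCube n at hy
      convert hy using 1
      push_cast; abel)
    rw [← this, neg_neg]

lemma cover_meas {n : ℕ} {K : Set (EuclideanSpace ℝ (Fin n))} (hK : IsCompact K) :
    MeasurableSet (intLat n + K) := by
  rw [← Set.iUnion_add_left_image]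
  refine MeasurableSet.biUnion (intLat_countable n) fun g _ => ?_
  exact (hK.image (by fun_prop)).measurableSet

lemma inv_cover {n : ℕ} {K : Set (EuclideanSpace ℝ (Fin n))} (g : latSub n)
    (x : EuclideanSpace ℝ (Fin n)) :
    (g : EuclideanSpace ℝ (Fin n)) + x ∈ intLat n + K ↔ x ∈ intLat n + K := by
  constructor
  · rintro ⟨a, ha, k, hk, h⟩
    refine ⟨-g + a, (latSub n).add_mem ((latSub n).neg_mem g.2) ha, k, hk, ?_⟩
    have h : a + k = g + x := h
    change -(g : EuclideanSpace ℝ (Fin n)) + a + k = x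
    rw [add_assoc, h]; abel
  · rintro ⟨a, ha, k, hk, h⟩
    refine ⟨g + a, (latSub n).add_mem g.2 ha, k, hk, ?_⟩
    have h : a + k = x := h
    change (g : EuclideanSpace ℝ (Fin n)) + a + k = g + x
    rw [add_assoc, h]

lemma slice {n : ℕ} {K : Set (EuclideanSpace ℝ (Fin n))} (hK : IsCompact K)
    (x : EuclideanSpace ℝ (Fin n)) :
    volume ((fun y => x - y) ⁻¹' (intLat n + K)ᶜ ∩ unitCube n) =
      volume ((intLat n + K)ᶜ ∩ unitCube n) := by
  have hmp := Measure.measurePreserving_sub_left (volume : Measure (EuclideanSpace ℝ (Fin n))) x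
  have hm : MeasurableSet ((intLat n + K)ᶜ ∩ (fun z => x - z) ⁻¹' unitCube n) :=
    (cover_meas hK).compl.inter ((unitCube_meas n).preimage (by fun_prop))
  have h1 := hmp.measure_preimage hm.nullMeasurableSet
  rw [Set.preimage_inter, ← Set.preimage_comp] at h1
  have h2 : ((fun z => x - z) ∘ (fun z : EuclideanSpace ℝ (Fin n) => x - z)) = id := by
    ext z; simp
  rw [h2, Set.preimage_id] at h1
  rw [h1]
  refine (fd' n x).measure_set_eq (fd n) (cover_meas hK).compl ?_
  intro g
  ext z
  exact not_congr (inv_cover g z)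

lemma uncovered {n : ℕ} (K : Set (EuclideanSpace ℝ (Fin n))) (y : EuclideanSpace ℝ (Fin n)) :
    unitCube n \ (intLat n + (K ∪ (K + {y}))) =
    {x | x ∈ (intLat n + K)ᶜ ∧ x - y ∈ (intLat n + K)ᶜ} ∩ unitCube n := by
  ext x
  have : x ∈ (intLat n + K) + {y} ↔ x - y ∈ intLat n + K := by
    rw [Set.add_singleton]
    constructor
    · rintro ⟨z, hz, rfl⟩; simpa using hz
    · intro h; exact ⟨_, h, by simp⟩
  rw [Set.add_union, ← add_assoc]
  simp only [Set.mem_diff, Set.mem_union, this, Set.mem_inter_iff, Set.mem_setOf_eq, Set.mem_compl_iff]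
  tauto

theorem random_translation_expectation (n : ℕ)
    (K : Set (EuclideanSpace ℝ (Fin n)))
    (hKcpt : IsCompact K) (hKconv : Convex ℝ K) (hKint : (interior K).Nonempty)
    (δ : ℝ) (hδ : δ = rhoBar K) :
    ∫ y in unitCube n, rhoBar (K ∪ (K + {y})) = δ ^ 2 := by
  set U := (intLat n + K)ᶜ with hU
  have hUm : MeasurableSet U := (cover_meas hKcpt).compl
  set C := unitCube n with hC
  have hCm : MeasurableSet C := unitCube_meas n
  have : IsFiniteMeasure (volume.restrict C) := ⟨by simpa using unitCube_fin n⟩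
  let ν := volume.restrict C
  let S : Set (EuclideanSpace ℝ (Fin n) × EuclideanSpace ℝ (Fin n)) :=
    {p | p.2 ∈ U ∧ p.2 - p.1 ∈ U}
  have hS : MeasurableSet S :=
    (hUm.preimage measurable_snd).inter (hUm.preimage (measurable_snd.sub measurable_fst))
  have h1 : ∀ y, rhoBar (K ∪ (K + {y})) = (ν (Prod.mk y ⁻¹' S)).toReal := by
    intro y
    rw [rhoBar, uncovered, Measure.restrict_apply (hS.preimage measurable_prodMk_left)]
    rfl
  simp_rw [h1]
  rw [integral_toReal (measurable_measure_prodMk_left hS).aemeasurable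
    (Filter.Eventually.of_forall fun y => measure_lt_top _ _), ← Measure.prod_apply hS,
    Measure.prod_apply_symm hS]
  have h2 : ∀ x, ν ((fun y => (y, x)) ⁻¹' S) = U.indicator (fun _ => volume (U ∩ C)) x := by
    intro x
    rw [Measure.restrict_apply (hS.preimage measurable_prodMk_right)]
    by_cases hx : x ∈ U
    · rw [Set.indicator_of_mem hx, ← slice hKcpt x]
      congr 1
      ext y
      simp [S, hx, ← hU, ← hC]
    · rw [Set.indicator_of_notMem hx]
      have : (fun y => (y, x)) ⁻¹' S = ∅ := by
        ext y; simp [S, hx]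
      simp [this]
  have h3 : δ = (volume (U ∩ C)).toReal := by
    rw [hδ, rhoBar, Set.diff_eq, Set.inter_comm]
  change (∫⁻ x, ν ((fun y => (y, x)) ⁻¹' S) ∂ν).toReal = _
  simp_rw [h2]
  rw [lintegral_indicator_const hUm, Measure.restrict_apply hUm, ENNReal.toReal_mul, h3, sq]

end
end

section
/- Let n ≥ 1 be an integer and r > 0. Every parallelepiped contained in the closed ball B_rⁿ has volume at most (2r/√n)ⁿ; that is, if x, b₁, …, bₙ ∈ ℝⁿ with b₁,…,bₙ linearly independent and the convex hull of {x + Σᵢ λᵢbᵢ : λᵢ ∈ {0,1}} is contained in B_rⁿ, then |det[b₁,…,bₙ]| ≤ (2r/√n)ⁿ. -/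
open MeasureTheory Pointwise

noncomputable section

theorem aux_sum {E ι : Type*} [NormedAddCommGroup E] [InnerProductSpace ℝ E] [DecidableEq ι]
    (b : ι → E) (R : ℝ) (s : Finset ι) : ∀ x : E,
    (∀ t ⊆ s, ‖x + ∑ i ∈ t, b i‖ ^ 2 ≤ R) →
    ‖x + (1 / 2 : ℝ) • ∑ i ∈ s, b i‖ ^ 2 + (∑ i ∈ s, ‖b i‖ ^ 2) / 4 ≤ R := by
  induction s using Finset.induction_on with
  | empty => intro x h; simpa using h ∅ (by simp)
  | insert a s ha ih =>
    intro x h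
    have h1 := ih x (fun t ht => h t (ht.trans (Finset.subset_insert a s)))
    have h2 := ih (x + b a) (fun t ht => by
      have := h (insert a t) (Finset.insert_subset_insert a ht)
      rwa [Finset.sum_insert (fun hh => ha (ht hh)), ← add_assoc] at this)
    rw [Finset.sum_insert ha, Finset.sum_insert ha]
    have e1 : x + (1 / 2 : ℝ) • (b a + ∑ i ∈ s, b i)
        = (x + (1 / 2 : ℝ) • ∑ i ∈ s, b i) + (1 / 2 : ℝ) • b a := by
      rw [smul_add]; abel
    have e2 : x + b a + (1 / 2 : ℝ) • ∑ i ∈ s, b i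
        = (x + (1 / 2 : ℝ) • ∑ i ∈ s, b i) + b a := by abel
    rw [e2] at h2
    rw [e1]
    generalize x + (1 / 2 : ℝ) • ∑ i ∈ s, b i = y at *
    rw [norm_add_sq_real] at h2 ⊢
    rw [inner_smul_right, norm_smul, mul_pow]
    norm_num at *
    linarith

theorem aux_hadamard_s10 {n : ℕ} (b : Fin n → EuclideanSpace ℝ (Fin n)) :
    |(Matrix.of fun i j => b j i).det| ≤ ∏ i, ‖b i‖ := by
  have : Fact (Module.finrank ℝ (EuclideanSpace ℝ (Fin n)) = n) := ⟨by simp⟩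
  let e := EuclideanSpace.basisFun (Fin n) ℝ
  have h := e.toBasis.orientation.abs_volumeForm_apply_le b
  rw [Orientation.volumeForm_robust _ e rfl, Module.Basis.det_apply] at h
  convert h using 3
  ext i j
  simp [e, Module.Basis.toMatrix_apply]

theorem aux_amgm {n : ℕ} (hn : 1 ≤ n) (z : Fin n → ℝ) (hz : ∀ i, 0 ≤ z i) :
    ∏ i, z i ≤ ((∑ i, z i) / n) ^ n := by
  have h0 : (0 : ℝ) < n := by exact_mod_cast hn
  have h := Real.geom_mean_le_arith_mean Finset.univ (fun _ => 1) z (by simp)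
    (by simpa using Nat.lt_of_lt_of_le Nat.zero_lt_one hn) (fun i _ => hz i)
  simp only [Real.rpow_one, one_mul, Finset.sum_const, Finset.card_univ, Fintype.card_fin,
    nsmul_eq_mul, mul_one] at h
  have hp : 0 ≤ ∏ i, z i := Finset.prod_nonneg fun i _ => hz i
  calc ∏ i, z i = ((∏ i, z i) ^ ((n : ℝ)⁻¹)) ^ n :=
        (Real.rpow_inv_natCast_pow hp (by omega)).symm
    _ ≤ _ := pow_le_pow_left₀ (Real.rpow_nonneg hp _) h n

/-- Every parallelepiped contained in the closed ball `B_rⁿ` has volume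
`|det[b₁,…,bₙ]| ≤ (2r/√n)ⁿ`. -/
theorem parallelepiped_in_ball_volume (n : ℕ) (hn : 1 ≤ n) (r : ℝ) (hr : 0 < r)
    (x : EuclideanSpace ℝ (Fin n)) (b : Fin n → EuclideanSpace ℝ (Fin n))
    (hb : LinearIndependent ℝ b)
    (hsub : convexHull ℝ (vertexSet x b) ⊆ Metric.closedBall 0 r) :
    |(Matrix.of fun i j => b j i).det| ≤ (2 * r / Real.sqrt n) ^ n := by
  have hs := aux_sum b (r ^ 2) Finset.univ x (by
    intro t _
    have hm : x + ∑ i ∈ t, b i ∈ vertexSet x b := by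
      refine ⟨fun i => if i ∈ t then 1 else 0, fun i => ?_, ?_⟩
      · by_cases h : i ∈ t <;> simp [h]
      · simp
    have := hsub (subset_convexHull ℝ _ hm)
    rw [mem_closedBall_zero_iff] at this
    exact pow_le_pow_left₀ (norm_nonneg _) this 2)
  have h0 : (0 : ℝ) < n := by exact_mod_cast hn
  have hs' : ∑ i, ‖b i‖ ^ 2 ≤ 4 * r ^ 2 := by
    nlinarith [sq_nonneg ‖x + (1 / 2 : ℝ) • ∑ i, b i‖]
  have hp : 0 ≤ ∏ i, ‖b i‖ := Finset.prod_nonneg fun i _ => norm_nonneg _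
  refine (aux_hadamard_s10 b).trans ?_
  refine (pow_le_pow_iff_left₀ hp (by positivity) two_ne_zero).1 ?_
  rw [← Finset.prod_pow]
  refine (aux_amgm hn _ fun i => sq_nonneg _).trans ?_
  rw [← pow_mul, mul_comm n 2, pow_mul, div_pow (2 * r), Real.sq_sqrt h0.le]
  have : 0 ≤ ∑ i, ‖b i‖ ^ 2 := Finset.sum_nonneg fun i _ => sq_nonneg _
  refine pow_le_pow_left₀ (by positivity) ?_ n
  gcongr
  linarith

end
end

section
/- Let n ≥ 1 be an integer and let (Λ, B_rⁿ) be a robust lattice covering of ℝⁿ with det(Λ) = 1. Then r ≥ √n/2. -/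
open MeasureTheory Pointwise

noncomputable section

theorem exists_signs {n : ℕ} (w : EuclideanSpace ℝ (Fin n))
    (v : Fin n → EuclideanSpace ℝ (Fin n)) (S : Finset (Fin n)) :
    ∃ e : Fin n → ℝ, (∀ i, e i = 1 ∨ e i = -1) ∧
      ‖w‖ ^ 2 + ∑ i ∈ S, ‖v i‖ ^ 2 ≤ ‖w + ∑ i ∈ S, e i • v i‖ ^ 2 := by
  classical
  induction S using Finset.induction_on with
  | empty => exact ⟨fun _ => 1, by simp, by simp⟩
  | insert a S ha ih =>
    obtain ⟨e, he, hle⟩ := ih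
    obtain ⟨t, ht, hti⟩ : ∃ t : ℝ, (t = 1 ∨ t = -1) ∧
        0 ≤ t * inner ℝ (w + ∑ i ∈ S, e i • v i) (v a) := by
      rcases le_total 0 (inner ℝ (w + ∑ i ∈ S, e i • v i) (v a)) with h | h
      · exact ⟨1, Or.inl rfl, by linarith⟩
      · exact ⟨-1, Or.inr rfl, by linarith⟩
    refine ⟨Function.update e a t, ?_, ?_⟩
    · intro i
      by_cases hi : i = a
      · subst hi; simpa using ht
      · simpa [Function.update_of_ne hi] using he i
    · have h1 : ∑ i ∈ S, Function.update e a t i • v i = ∑ i ∈ S, e i • v i := by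
        refine Finset.sum_congr rfl fun i hi => ?_
        rw [Function.update_of_ne]
        rintro rfl
        exact ha hi
      rw [Finset.sum_insert ha, Finset.sum_insert ha, h1, Function.update_self,
        add_left_comm w, add_comm (t • v a), norm_add_sq_real, inner_smul_right, norm_smul]
      have h2 : (‖t‖ * ‖v a‖) ^ 2 = ‖v a‖ ^ 2 := by
        rcases ht with rfl | rfl <;> simp
      rw [h2]
      linarith

theorem volume_hull_le {n : ℕ} (x : EuclideanSpace ℝ (Fin n))
    (v : Fin n → EuclideanSpace ℝ (Fin n)) :
    volume (convexHull ℝ (vertexSet x v)) ≤ ENNReal.ofReal (∏ i, ‖v i‖) := by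
  have hsub : convexHull ℝ (vertexSet x v) ⊆ x +ᵥ parallelepiped v := by
    refine convexHull_min ?_ ((convex_parallelepiped v).vadd x)
    rintro y ⟨lam, hl, rfl⟩
    refine Set.vadd_mem_vadd_set ?_
    rw [mem_parallelepiped_iff]
    refine ⟨lam, ⟨fun i => ?_, fun i => ?_⟩, rfl⟩ <;>
      rcases hl i with h | h <;> simp [h]
  haveI : Fact (Module.finrank ℝ (EuclideanSpace ℝ (Fin n)) = n) := ⟨by simp⟩
  let o : Orientation ℝ (EuclideanSpace ℝ (Fin n)) (Fin n) :=
    (EuclideanSpace.basisFun (Fin n) ℝ).toBasis.orientation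
  calc volume (convexHull ℝ (vertexSet x v)) ≤ volume (x +ᵥ parallelepiped v) :=
        measure_mono hsub
    _ = volume (parallelepiped v) := measure_vadd _ _ _
    _ = ENNReal.ofReal |o.volumeForm v| := by
        rw [← o.measure_eq_volume, AlternatingMap.measure_parallelepiped]
    _ ≤ _ := ENNReal.ofReal_le_ofReal (o.abs_volumeForm_apply_le v)

/-- For a robust lattice covering `(Λ, B_rⁿ)` of `ℝⁿ` with `det(Λ) = 1`, one has
`r ≥ √n / 2`. -/
theorem robust_covering_radius_lower_bound (n : ℕ) (hn : 1 ≤ n)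
    (b : Fin n → EuclideanSpace ℝ (Fin n)) (r : ℝ)
    (hrob : IsRobustCovering b r) (hdet : latticeDet b = 1) :
    Real.sqrt n / 2 ≤ r := by
  obtain ⟨P, ⟨x, v, -, rfl, -, hvol⟩, hball⟩ := hrob.2 0
  have hn0 : (0 : ℝ) < n := by exact_mod_cast hn
  have hprod : 1 ≤ ∏ i, ‖v i‖ := by
    have h := volume_hull_le x v
    rw [hvol, hdet] at h
    exact (ENNReal.ofReal_le_ofReal_iff
      (Finset.prod_nonneg fun i _ => norm_nonneg _)).1 h
  have hprod2 : 1 ≤ ∏ i, ‖v i‖ ^ 2 := by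
    rw [Finset.prod_pow]
    exact one_le_pow₀ hprod
  have hsum : (n : ℝ) ≤ ∑ i, ‖v i‖ ^ 2 := by
    have h := Real.geom_mean_le_arith_mean Finset.univ (fun _ : Fin n => (1 : ℝ))
      (fun i => ‖v i‖ ^ 2) (fun _ _ => zero_le_one) (by simpa using hn0)
      (fun i _ => by positivity)
    simp only [Real.rpow_one, one_mul, Finset.sum_const, Finset.card_univ, Fintype.card_fin,
      nsmul_eq_mul, mul_one] at h
    have h1 := (Real.one_le_rpow hprod2 (inv_nonneg.2 hn0.le)).trans h
    rwa [le_div_iff₀ hn0, one_mul] at h1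
  obtain ⟨e, he, hle⟩ := exists_signs (x + (1 / 2 : ℝ) • ∑ i, v i)
    (fun i => (1 / 2 : ℝ) • v i) Finset.univ
  have hmem : (x + (1 / 2 : ℝ) • ∑ i, v i) + ∑ i, e i • (1 / 2 : ℝ) • v i
      ∈ vertexSet x v := by
    refine ⟨fun i => (1 + e i) / 2, fun i => ?_, ?_⟩
    · rcases he i with h | h <;> simp [h]
    · rw [add_assoc, Finset.smul_sum, ← Finset.sum_add_distrib]
      congr 1
      refine Finset.sum_congr rfl fun i _ => ?_
      module
  have hr := hball (subset_convexHull ℝ _ hmem)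
  rw [mem_closedBall_zero_iff] at hr
  have hr0 : 0 ≤ r := (norm_nonneg _).trans hr
  have hq : ∑ i, ‖(1 / 2 : ℝ) • v i‖ ^ 2 = (∑ i, ‖v i‖ ^ 2) / 4 := by
    rw [Finset.sum_div]
    refine Finset.sum_congr rfl fun i _ => ?_
    rw [norm_smul, mul_pow]
    norm_num
    ring
  rw [hq] at hle
  have h3 := pow_le_pow_left₀ (norm_nonneg _) hr 2
  have h4 := sq_nonneg ‖x + (1 / 2 : ℝ) • ∑ i, v i‖
  have h5 : Real.sqrt n ≤ 2 * r := by
    rw [Real.sqrt_le_left (by linarith)]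
    nlinarith
  linarith

end
end
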